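/- arXiv:2602.12671 — 3 statements merged into one kernel-verified Lean document; each statement's English description precedes it below -/
import Mathlib

section
/- Let (C, γ, α, R) be a Rota-Baxter Hom-Lie coalgebra of weight λ over a field of characteristic 0. Define γ̃ = λγ and Δ̃ = (R⊗I)∘γ, where I is the identity. Then (C, γ̃, Δ̃, α) is a post-Hom-Lie coalgebra (with Hom-Lie cobracket γ̃ and comultiplication Δ̃). -/
open TensorProduct

noncomputable section

variable {F : Type*} [Field F] [CharZero F]
variable {C : Type*} [AddCommGroup C] [Module F C]

/-- The flip `τ : x ⊗ y ↦ y ⊗ x` on `C ⊗ C`. -/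
def tw : C ⊗[F] C →ₗ[F] C ⊗[F] C := (TensorProduct.comm F C C).toLinearMap

/-- `(f ⊗ g)` (followed by the associator), for `f : C → C ⊗ C`, `g : C → C`. -/
def rT (f : C →ₗ[F] C ⊗[F] C) (g : C →ₗ[F] C) :
    C ⊗[F] C →ₗ[F] C ⊗[F] (C ⊗[F] C) :=
  (TensorProduct.assoc F C C C).toLinearMap ∘ₗ TensorProduct.map f g

/-- `(g ⊗ f)` for `g : C → C`, `f : C → C ⊗ C`. -/
def lT (g : C →ₗ[F] C) (f : C →ₗ[F] C ⊗[F] C) :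
    C ⊗[F] C →ₗ[F] C ⊗[F] (C ⊗[F] C) :=
  TensorProduct.map g f

/-- `τ ⊗ I` acting on `C ⊗ (C ⊗ C)` (swap of the first two factors). -/
def sw12 : C ⊗[F] (C ⊗[F] C) →ₗ[F] C ⊗[F] (C ⊗[F] C) :=
  (TensorProduct.assoc F C C C).toLinearMap ∘ₗ
    TensorProduct.map (tw : C ⊗[F] C →ₗ[F] C ⊗[F] C) (LinearMap.id : C →ₗ[F] C) ∘ₗ
    (TensorProduct.assoc F C C C).symm.toLinearMap

/-- The cyclic permutation `ξ : x ⊗ y ⊗ z ↦ y ⊗ z ⊗ x` on `C ⊗ (C ⊗ C)`. -/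
def cyc : C ⊗[F] (C ⊗[F] C) →ₗ[F] C ⊗[F] (C ⊗[F] C) :=
  TensorProduct.map (LinearMap.id : C →ₗ[F] C) (tw : C ⊗[F] C →ₗ[F] C ⊗[F] C) ∘ₗ sw12

/-- Hom-Lie coalgebra axioms for `(C, γ, α)`: skew-cocommutativity,
comultiplicativity, and the Hom-co-Jacobi identity. -/
def IsHomLieCoalgebra (γ : C →ₗ[F] C ⊗[F] C) (α : C →ₗ[F] C) : Prop :=
  (γ = -(tw ∘ₗ γ)) ∧
  (γ ∘ₗ α = TensorProduct.map α α ∘ₗ γ) ∧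
  ((LinearMap.id + cyc + cyc ∘ₗ cyc) ∘ₗ (lT α γ ∘ₗ γ) = 0)

/-- Post-Hom-Lie coalgebra axioms for `(C, γ, Δ, α)`. -/
def IsPostHomLieCoalgebra (γ Δ : C →ₗ[F] C ⊗[F] C) (α : C →ₗ[F] C) : Prop :=
  IsHomLieCoalgebra γ α ∧
  (lT α γ ∘ₗ Δ - rT Δ α ∘ₗ γ - sw12 ∘ₗ (lT α Δ ∘ₗ γ) = 0) ∧
  (rT Δ α ∘ₗ Δ - lT α Δ ∘ₗ Δ - sw12 ∘ₗ (rT Δ α ∘ₗ Δ) +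
    sw12 ∘ₗ (lT α Δ ∘ₗ Δ) + rT γ α ∘ₗ Δ = 0)

set_option linter.unusedSectionVars false

theorem aux_sw (a b : C →ₗ[F] C) (t : C ⊗[F] (C ⊗[F] C)) :
    sw12 (TensorProduct.map a (TensorProduct.map b LinearMap.id) t) =
      TensorProduct.map b (TensorProduct.map a LinearMap.id) (sw12 t) := by
  have : sw12 ∘ₗ (TensorProduct.map a (TensorProduct.map b (LinearMap.id : C →ₗ[F] C))) =
      TensorProduct.map b (TensorProduct.map a LinearMap.id) ∘ₗ sw12 := by
    ext x y z
    simp [sw12, tw]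
  exact LinearMap.congr_fun this t

theorem aux_rT_map (a b α : C →ₗ[F] C) (f : C →ₗ[F] C ⊗[F] C) (t : C ⊗[F] C) :
    rT (TensorProduct.map a b ∘ₗ f) α t =
      TensorProduct.map a (TensorProduct.map b LinearMap.id) (rT f α t) := by
  induction t with
  | zero => simp
  | add x y hx hy => simp only [map_add, hx, hy]
  | tmul x y =>
    simp only [rT, LinearMap.comp_apply, TensorProduct.map_tmul, LinearEquiv.coe_coe]
    induction f x with
    | zero => simp
    | add x y hx hy => simp only [map_add, TensorProduct.add_tmul, hx, hy]
    | tmul x y => simp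

theorem aux_rT_tw (α : C →ₗ[F] C) (f : C →ₗ[F] C ⊗[F] C) (t : C ⊗[F] C) :
    rT (tw ∘ₗ f) α t = sw12 (rT f α t) := by
  induction t with
  | zero => simp
  | add x y hx hy => simp only [map_add, hx, hy]
  | tmul x y =>
    simp only [rT, LinearMap.comp_apply, TensorProduct.map_tmul, LinearEquiv.coe_coe]
    simp [sw12]

theorem aux_rT_comp (α R : C →ₗ[F] C) (f : C →ₗ[F] C ⊗[F] C) (t : C ⊗[F] C) :
    rT (f ∘ₗ R) α t = rT f α (TensorProduct.map R LinearMap.id t) := by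
  induction t with
  | zero => simp
  | add x y hx hy => simp only [map_add, hx, hy]
  | tmul x y => simp [rT]

theorem aux_lT (α R a b : C →ₗ[F] C) (hRα : R ∘ₗ α = α ∘ₗ R)
    (f : C →ₗ[F] C ⊗[F] C) (t : C ⊗[F] C) :
    lT α (TensorProduct.map a b ∘ₗ f) (TensorProduct.map R LinearMap.id t) =
      TensorProduct.map R (TensorProduct.map a b) (lT α f t) := by
  induction t with
  | zero => simp
  | add x y hx hy => simp only [map_add, hx, hy]
  | tmul x y =>
    have := LinearMap.congr_fun hRα x
    simp only [LinearMap.comp_apply] at this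
    simp [lT, this]

theorem aux_cyc (α : C →ₗ[F] C) (f : C →ₗ[F] C ⊗[F] C) (t : C ⊗[F] C) :
    rT f α (tw t) = cyc (lT α f t) := by
  induction t with
  | zero => simp
  | add x y hx hy => simp only [map_add, hx, hy]
  | tmul x y =>
    simp only [rT, lT, tw, LinearMap.comp_apply, TensorProduct.map_tmul, LinearEquiv.coe_coe,
      TensorProduct.comm_tmul]
    induction f y with
    | zero => simp
    | add x y hx hy => simp only [map_add, TensorProduct.add_tmul, TensorProduct.tmul_add, hx, hy]
    | tmul x y => simp [cyc, sw12, tw]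

theorem aux_cyc2 (α : C →ₗ[F] C) (f : C →ₗ[F] C ⊗[F] C) (t : C ⊗[F] C) :
    sw12 (lT α (tw ∘ₗ f) t) = cyc (cyc (lT α f t)) := by
  induction t with
  | zero => simp
  | add x y hx hy => simp only [map_add, hx, hy]
  | tmul x y =>
    simp only [lT, LinearMap.comp_apply, TensorProduct.map_tmul]
    induction f y with
    | zero => simp
    | add x y hx hy => simp only [map_add, TensorProduct.tmul_add, hx, hy]
    | tmul x y => simp [cyc, sw12, tw]

theorem aux_jac (γ : C →ₗ[F] C ⊗[F] C) (α : C →ₗ[F] C) (h : IsHomLieCoalgebra γ α) (x : C) :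
    rT γ α (γ x) = lT α γ (γ x) - sw12 (lT α γ (γ x)) := by
  obtain ⟨h1, -, h3⟩ := h
  have e1 : rT γ α (γ x) = - cyc (lT α γ (γ x)) := by
    have : γ x = - tw (γ x) := LinearMap.congr_fun h1 x
    rw [← aux_cyc, ← map_neg, ← this]
  have e2 : sw12 (lT α γ (γ x)) = - cyc (cyc (lT α γ (γ x))) := by
    rw [← aux_cyc2]
    have : lT α (tw ∘ₗ γ) = - lT α γ := by
      have h1' : tw ∘ₗ γ = -γ := by rw [eq_neg_iff_add_eq_zero, add_comm, ← eq_neg_iff_add_eq_zero]; exact h1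
      rw [h1']
      ext; simp [lT, TensorProduct.tmul_neg]
    rw [this]; simp
  have e3 : lT α γ (γ x) + cyc (lT α γ (γ x)) + cyc (cyc (lT α γ (γ x))) = 0 :=
    LinearMap.congr_fun h3 x
  rw [e1, e2, sub_neg_eq_add, eq_comm, ← sub_eq_zero, ← e3]
  abel

theorem aux_rT_add (α : C →ₗ[F] C) (f g : C →ₗ[F] C ⊗[F] C) :
    rT (f + g) α = rT f α + rT g α := by
  simp [rT, TensorProduct.map_add_left, LinearMap.comp_add]

theorem aux_rT_smul (α : C →ₗ[F] C) (f : C →ₗ[F] C ⊗[F] C) (c : F) :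
    rT (c • f) α = c • rT f α := by
  simp [rT, TensorProduct.map_smul_left, LinearMap.comp_smul]

theorem aux_lT_smul (α : C →ₗ[F] C) (f : C →ₗ[F] C ⊗[F] C) (c : F) :
    lT α (c • f) = c • lT α f := by
  simp [lT, TensorProduct.map_smul_right]

/-- A Rota-Baxter Hom-Lie coalgebra of weight `lam` yields a post-Hom-Lie
coalgebra with `γ̃ = lam • γ` and `Δ̃ = (R ⊗ I) ∘ γ`. -/
theorem rotaBaxterHomLie_postHomLieCoalgebra
    (γ : C →ₗ[F] C ⊗[F] C) (α R : C →ₗ[F] C) (lam : F)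
    (h : IsHomLieCoalgebra γ α)
    (hRα : R ∘ₗ α = α ∘ₗ R)
    (hRB : TensorProduct.map R R ∘ₗ γ =
      (TensorProduct.map R (LinearMap.id : C →ₗ[F] C) ∘ₗ γ +
       TensorProduct.map (LinearMap.id : C →ₗ[F] C) R ∘ₗ γ + lam • γ) ∘ₗ R) :
    IsPostHomLieCoalgebra (lam • γ)
      (TensorProduct.map R (LinearMap.id : C →ₗ[F] C) ∘ₗ γ) α := by
  have J := aux_jac γ α h
  have hid : ∀ t, lT α (TensorProduct.map R LinearMap.id ∘ₗ γ) t =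
      TensorProduct.map LinearMap.id (TensorProduct.map R LinearMap.id) (lT α γ t) := by
    intro t
    have := aux_lT α LinearMap.id R LinearMap.id rfl γ t
    rwa [TensorProduct.map_id, LinearMap.id_apply] at this
  have hl : ∀ t, lT α γ (TensorProduct.map R LinearMap.id t) =
      TensorProduct.map R (TensorProduct.map LinearMap.id LinearMap.id) (lT α γ t) := by
    intro t
    have := aux_lT α R LinearMap.id LinearMap.id hRα γ t
    rwa [TensorProduct.map_id, LinearMap.id_comp, ← TensorProduct.map_id] at this
  refine ⟨⟨?_, ?_, ?_⟩, ?_, ?_⟩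
  · ext1 x
    have h1 : γ x = - tw (γ x) := LinearMap.congr_fun h.1 x
    simp only [LinearMap.neg_apply, LinearMap.comp_apply, LinearMap.smul_apply, map_smul]
    conv_lhs => rw [h1]
    exact smul_neg _ _
  · rw [LinearMap.smul_comp, LinearMap.comp_smul, h.2.1]
  · rw [aux_lT_smul, LinearMap.smul_comp, LinearMap.comp_smul, LinearMap.comp_smul,
      LinearMap.comp_smul, h.2.2, smul_zero, smul_zero]
  · ext1 x
    simp only [LinearMap.sub_apply, LinearMap.comp_apply, LinearMap.smul_apply, aux_lT_smul,
      map_smul, LinearMap.zero_apply, ← smul_sub]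
    rw [hid, aux_sw, hl, aux_rT_map, J]
    simp only [map_sub]
    simp
  · ext1 x
    have h1 : TensorProduct.map LinearMap.id R ∘ₗ γ =
        - (tw ∘ₗ (TensorProduct.map R LinearMap.id ∘ₗ γ)) := by
      have : (TensorProduct.map LinearMap.id R : C ⊗[F] C →ₗ[F] C ⊗[F] C) ∘ₗ tw =
          tw ∘ₗ TensorProduct.map R LinearMap.id := by
        ext; simp [tw]
      conv_lhs => rw [h.1]
      rw [LinearMap.comp_neg, ← LinearMap.comp_assoc, this, LinearMap.comp_assoc]
    have K := aux_rT_map R R α γ (γ x)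
    rw [hRB, aux_rT_comp, aux_rT_add, aux_rT_add, h1, ← neg_one_smul F, aux_rT_smul, J] at K
    simp only [LinearMap.add_apply, LinearMap.smul_apply, aux_rT_tw, map_sub] at K
    rw [← aux_sw, ← aux_lT α R R LinearMap.id hRα] at K
    simp only [LinearMap.sub_apply, LinearMap.add_apply, LinearMap.comp_apply,
      LinearMap.zero_apply, aux_rT_smul, LinearMap.smul_apply] at K ⊢
    rw [neg_one_smul] at K
    rw [← sub_eq_zero] at K
    rw [← K]
    abel
end
end

section
/- Let (C, γ, Δ, α) be a post-Hom-Lie coalgebra over a field of characteristic 0 and let (C', Δ', α') be a cocommutative comultiplicative Hom-coassociative coalgebra (so τ'∘Δ' = Δ' and Δ'∘α' = (α'⊗α')∘Δ', where τ' is the flip of C'⊗C'). On C'⊗C define the linear maps Δ̃ = (I⊗σ⊗I)∘(Δ'⊗Δ), γ̃ = (I⊗σ⊗I)∘(Δ'⊗γ), and α̃ = α'⊗α, where σ swaps the middle two tensor factors C'⊗C → C⊗C'. Then (C'⊗C, γ̃, Δ̃, α̃) is a post-Hom-Lie coalgebra. -/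
open TensorProduct

noncomputable section

variable {F : Type*} [Field F] [CharZero F]
variable {C : Type*} [AddCommGroup C] [Module F C]

section helpers
variable {D : Type*} [AddCommGroup D] [Module F D]

/-- The shuffle of three pairs of factors. -/
def shuf (F D C : Type*) [Field F] [AddCommGroup D] [Module F D] [AddCommGroup C] [Module F C] :
    (D ⊗[F] (D ⊗[F] D)) ⊗[F] (C ⊗[F] (C ⊗[F] C)) →ₗ[F]
      (D ⊗[F] C) ⊗[F] ((D ⊗[F] C) ⊗[F] (D ⊗[F] C)) :=
  TensorProduct.map LinearMap.id (TensorProduct.tensorTensorTensorComm F D D C C).toLinearMap ∘ₗ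
    (TensorProduct.tensorTensorTensorComm F D (D ⊗[F] D) C (C ⊗[F] C)).toLinearMap

lemma shuf_tmul (a b c : D) (x y z : C) :
    shuf F D C ((a ⊗ₜ (b ⊗ₜ c)) ⊗ₜ (x ⊗ₜ (y ⊗ₜ z))) =
      (a ⊗ₜ x) ⊗ₜ ((b ⊗ₜ y) ⊗ₜ (c ⊗ₜ z)) := by
  simp [shuf]

lemma sw12_tmul (x y z : C) :
    sw12 (F := F) (x ⊗ₜ (y ⊗ₜ z)) = y ⊗ₜ (x ⊗ₜ z) := by
  simp [sw12, tw]

lemma cyc_tmul (x y z : C) :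
    cyc (F := F) (x ⊗ₜ (y ⊗ₜ z)) = y ⊗ₜ (z ⊗ₜ x) := by
  simp [cyc, sw12_tmul, tw]

lemma ext6 {M : Type*} [AddCommGroup M] [Module F M]
    {f g : (D ⊗[F] (D ⊗[F] D)) ⊗[F] (C ⊗[F] (C ⊗[F] C)) →ₗ[F] M}
    (h : ∀ (a b c : D) (x y z : C), f ((a ⊗ₜ (b ⊗ₜ c)) ⊗ₜ (x ⊗ₜ (y ⊗ₜ z))) =
      g ((a ⊗ₜ (b ⊗ₜ c)) ⊗ₜ (x ⊗ₜ (y ⊗ₜ z)))) : f = g := by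
  ext a b c x y z
  exact h a b c x y z

lemma sw12_shuf : sw12 ∘ₗ shuf F D C = shuf F D C ∘ₗ TensorProduct.map sw12 sw12 := by
  apply ext6
  intros
  simp [shuf_tmul, sw12_tmul]

lemma cyc_shuf : cyc ∘ₗ shuf F D C = shuf F D C ∘ₗ TensorProduct.map cyc cyc := by
  apply ext6
  intros
  simp [shuf_tmul, cyc_tmul]

lemma assoc_shuf :
    (TensorProduct.assoc F (D ⊗[F] C) (D ⊗[F] C) (D ⊗[F] C)).toLinearMap ∘ₗ
      TensorProduct.map (TensorProduct.tensorTensorTensorComm F D D C C).toLinearMap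
        LinearMap.id ∘ₗ
      (TensorProduct.tensorTensorTensorComm F (D ⊗[F] D) D (C ⊗[F] C) C).toLinearMap =
    shuf F D C ∘ₗ TensorProduct.map (TensorProduct.assoc F D D D).toLinearMap
      (TensorProduct.assoc F C C C).toLinearMap := by
  ext a b c x y z
  simp [shuf_tmul]

lemma lT_shuf (d : D →ₗ[F] D ⊗[F] D) (b : D →ₗ[F] D) (f g : C →ₗ[F] C ⊗[F] C)
    (α : C →ₗ[F] C) :
    lT (TensorProduct.map b α) ((TensorProduct.tensorTensorTensorComm F D D C C).toLinearMap ∘ₗ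
        TensorProduct.map d f) ∘ₗ ((TensorProduct.tensorTensorTensorComm F D D C C).toLinearMap ∘ₗ
        TensorProduct.map d g) =
    shuf F D C ∘ₗ TensorProduct.map (lT b d ∘ₗ d) (lT α f ∘ₗ g) := by
  have : lT (TensorProduct.map b α)
      ((TensorProduct.tensorTensorTensorComm F D D C C).toLinearMap ∘ₗ
        TensorProduct.map d f) ∘ₗ (TensorProduct.tensorTensorTensorComm F D D C C).toLinearMap =
      shuf F D C ∘ₗ TensorProduct.map (lT b d) (lT α f) := by
    ext a b x y
    simp [lT, shuf]
  rw [← LinearMap.comp_assoc, this, TensorProduct.map_comp, LinearMap.comp_assoc]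

lemma rT_shuf (d : D →ₗ[F] D ⊗[F] D) (b : D →ₗ[F] D) (f g : C →ₗ[F] C ⊗[F] C)
    (α : C →ₗ[F] C) :
    rT ((TensorProduct.tensorTensorTensorComm F D D C C).toLinearMap ∘ₗ
        TensorProduct.map d f) (TensorProduct.map b α) ∘ₗ
        ((TensorProduct.tensorTensorTensorComm F D D C C).toLinearMap ∘ₗ
        TensorProduct.map d g) =
    shuf F D C ∘ₗ TensorProduct.map (rT d b ∘ₗ d) (rT f α ∘ₗ g) := by
  have : rT ((TensorProduct.tensorTensorTensorComm F D D C C).toLinearMap ∘ₗ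
        TensorProduct.map d f) (TensorProduct.map b α) ∘ₗ
        (TensorProduct.tensorTensorTensorComm F D D C C).toLinearMap =
      shuf F D C ∘ₗ TensorProduct.map (rT d b) (rT f α) := by
    rw [rT, rT, rT, TensorProduct.map_comp, ← LinearMap.comp_assoc, ← assoc_shuf]
    ext a b x y
    simp
  rw [← LinearMap.comp_assoc, this, TensorProduct.map_comp, LinearMap.comp_assoc]

lemma sw12_shuf' {A B : Type*} [AddCommGroup A] [Module F A] [AddCommGroup B] [Module F B]
    {T : A →ₗ[F] D ⊗[F] (D ⊗[F] D)} (hT : sw12 ∘ₗ T = T) (X : B →ₗ[F] C ⊗[F] (C ⊗[F] C)) :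
    sw12 ∘ₗ (shuf F D C ∘ₗ TensorProduct.map T X) =
      shuf F D C ∘ₗ TensorProduct.map T (sw12 ∘ₗ X) := by
  rw [← LinearMap.comp_assoc, sw12_shuf, LinearMap.comp_assoc, ← TensorProduct.map_comp, hT]

lemma cyc_shuf' {A B : Type*} [AddCommGroup A] [Module F A] [AddCommGroup B] [Module F B]
    {T : A →ₗ[F] D ⊗[F] (D ⊗[F] D)} (hT : cyc ∘ₗ T = T) (X : B →ₗ[F] C ⊗[F] (C ⊗[F] C)) :
    cyc ∘ₗ (shuf F D C ∘ₗ TensorProduct.map T X) =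
      shuf F D C ∘ₗ TensorProduct.map T (cyc ∘ₗ X) := by
  rw [← LinearMap.comp_assoc, cyc_shuf, LinearMap.comp_assoc, ← TensorProduct.map_comp, hT]

lemma sw12_rT (d : D →ₗ[F] D ⊗[F] D) (b : D →ₗ[F] D) (h : tw ∘ₗ d = d) :
    sw12 ∘ₗ rT d b = rT d b := by
  conv_rhs => rw [← h]
  ext x y
  simp [sw12, rT]

lemma tw_lT (d : D →ₗ[F] D ⊗[F] D) (b : D →ₗ[F] D) (h : tw ∘ₗ d = d) :
    TensorProduct.map LinearMap.id tw ∘ₗ lT b d = lT b d := by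
  rw [lT, ← TensorProduct.map_comp, h, LinearMap.id_comp]

end helpers

/-- The tensor product of a cocommutative comultiplicative Hom-coassociative
coalgebra `(C', Δ', α')` with a post-Hom-Lie coalgebra `(C, γ, Δ, α)` is a
post-Hom-Lie coalgebra, with structure maps `(I ⊗ σ ⊗ I) ∘ (Δ' ⊗ γ)`,
`(I ⊗ σ ⊗ I) ∘ (Δ' ⊗ Δ)` and `α' ⊗ α`. -/
theorem tensor_postHomLieCoalgebra
    {C' : Type*} [AddCommGroup C'] [Module F C']
    (γ Δ : C →ₗ[F] C ⊗[F] C) (α : C →ₗ[F] C)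
    (Δ' : C' →ₗ[F] C' ⊗[F] C') (α' : C' →ₗ[F] C')
    (h : IsPostHomLieCoalgebra γ Δ α)
    (hcoassoc : lT α' Δ' ∘ₗ Δ' = rT Δ' α' ∘ₗ Δ')
    (hcocomm : tw ∘ₗ Δ' = Δ')
    (hcomult : Δ' ∘ₗ α' = TensorProduct.map α' α' ∘ₗ Δ') :
    IsPostHomLieCoalgebra
      ((TensorProduct.tensorTensorTensorComm F C' C' C C).toLinearMap ∘ₗ
        TensorProduct.map Δ' γ)
      ((TensorProduct.tensorTensorTensorComm F C' C' C C).toLinearMap ∘ₗ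
        TensorProduct.map Δ' Δ)
      (TensorProduct.map α' α) := by
  obtain ⟨⟨h1, h2, h3⟩, h4, h5⟩ := h
  have hs : sw12 ∘ₗ (lT α' Δ' ∘ₗ Δ') = lT α' Δ' ∘ₗ Δ' := by
    rw [hcoassoc, ← LinearMap.comp_assoc, sw12_rT _ _ hcocomm]
  have hc : cyc ∘ₗ (lT α' Δ' ∘ₗ Δ') = lT α' Δ' ∘ₗ Δ' := by
    rw [cyc, LinearMap.comp_assoc, hs, ← LinearMap.comp_assoc, tw_lT _ _ hcocomm]
  refine ⟨⟨?_, ?_, ?_⟩, ?_, ?_⟩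
  · have key : tw ∘ₗ (TensorProduct.tensorTensorTensorComm F C' C' C C).toLinearMap =
        (TensorProduct.tensorTensorTensorComm F C' C' C C).toLinearMap ∘ₗ
          TensorProduct.map tw tw := by
      ext a b x y
      simp [tw]
    rw [← LinearMap.comp_assoc, key, LinearMap.comp_assoc, ← TensorProduct.map_comp, hcocomm]
    conv_lhs => rw [h1]
    ext x y
    simp [TensorProduct.tmul_neg]
  · have key : (TensorProduct.tensorTensorTensorComm F C' C' C C).toLinearMap ∘ₗ
          TensorProduct.map (TensorProduct.map α' α') (TensorProduct.map α α) =
        TensorProduct.map (TensorProduct.map α' α) (TensorProduct.map α' α) ∘ₗ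
        (TensorProduct.tensorTensorTensorComm F C' C' C C).toLinearMap := by
      ext a b x y
      simp
    rw [LinearMap.comp_assoc, ← TensorProduct.map_comp, hcomult, h2, TensorProduct.map_comp,
      ← LinearMap.comp_assoc, key, LinearMap.comp_assoc]
  · rw [LinearMap.add_comp, LinearMap.add_comp, LinearMap.id_comp, LinearMap.comp_assoc, lT_shuf,
      cyc_shuf' hc, cyc_shuf' hc, ← LinearMap.comp_add, ← LinearMap.comp_add,
      ← TensorProduct.map_add_right, ← TensorProduct.map_add_right]
    rw [LinearMap.add_comp, LinearMap.add_comp, LinearMap.id_comp, LinearMap.comp_assoc] at h3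
    rw [h3, TensorProduct.map_zero_right, LinearMap.comp_zero]
  · rw [lT_shuf, lT_shuf, rT_shuf, ← hcoassoc, sw12_shuf' hs, ← LinearMap.comp_sub,
      ← LinearMap.comp_sub]
    have : ∀ X Y Z : C →ₗ[F] C ⊗[F] (C ⊗[F] C), X - Y - Z = 0 →
        shuf F C' C ∘ₗ (TensorProduct.map (lT α' Δ' ∘ₗ Δ') X -
          TensorProduct.map (lT α' Δ' ∘ₗ Δ') Y - TensorProduct.map (lT α' Δ' ∘ₗ Δ') Z) = 0 := by
      intro X Y Z h
      have e : X = Y + Z := by rw [sub_sub, sub_eq_zero] at h; exact h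
      rw [e]
      ext x y
      simp [TensorProduct.tmul_add]
    exact this _ _ _ h4
  · rw [lT_shuf, rT_shuf, rT_shuf, ← hcoassoc, sw12_shuf' hs, sw12_shuf' hs]
    generalize rT Δ α ∘ₗ Δ = X at *
    generalize lT α Δ ∘ₗ Δ = Y at *
    have e : rT γ α ∘ₗ Δ = -(X - Y - sw12 ∘ₗ X + sw12 ∘ₗ Y) := by
      rw [eq_neg_iff_add_eq_zero, add_comm]; exact h5
    rw [e]
    ext x y
    simp [TensorProduct.tmul_neg, TensorProduct.tmul_sub, TensorProduct.tmul_add]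
end
end

section
/- Let (M, Δ_⋄, Δ_•, α_M) be a comodule over a post-Hom-Lie coalgebra (L, γ, Δ, α) over a field of characteristic 0. Let β : L → L be an endomorphism of the post-Hom-Lie coalgebra (so β∘α = α∘β, γ∘β = (β⊗β)∘γ, Δ∘β = (β⊗β)∘Δ) and let β_M : M → M be a linear map with α_M∘β_M = β_M∘α_M, Δ_⋄∘β_M = (β⊗β_M)∘Δ_⋄ and Δ_•∘β_M = (β⊗β_M)∘Δ_•. Define Δ̃_⋄ = (β⊗Id_M)∘Δ_⋄∘β_M and Δ̃_• = (β⊗Id_M)∘Δ_•∘β_M. Then (M, Δ̃_⋄, Δ̃_•, α_M∘β_M) is a comodule over the twisted post-Hom-Lie coalgebra (L, γ∘β, Δ∘β, β∘α). -/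
open TensorProduct

noncomputable section

variable {F : Type*} [Field F] [CharZero F]
variable {C : Type*} [AddCommGroup C] [Module F C]

variable {M : Type*} [AddCommGroup M] [Module F M]

/-- `(f ⊗ g)` (followed by the associator) for `f : C → C ⊗ C`, `g : M → M`. -/
def rTM (f : C →ₗ[F] C ⊗[F] C) (g : M →ₗ[F] M) :
    C ⊗[F] M →ₗ[F] C ⊗[F] (C ⊗[F] M) :=
  (TensorProduct.assoc F C C M).toLinearMap ∘ₗ TensorProduct.map f g

/-- `(g ⊗ f)` for `g : C → C`, `f : M → C ⊗ M`. -/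
def lTM (g : C →ₗ[F] C) (f : M →ₗ[F] C ⊗[F] M) :
    C ⊗[F] M →ₗ[F] C ⊗[F] (C ⊗[F] M) :=
  TensorProduct.map g f

/-- `τ ⊗ Id_M` acting on `C ⊗ (C ⊗ M)` (swap of the two `C`-factors). -/
def sw12M : C ⊗[F] (C ⊗[F] M) →ₗ[F] C ⊗[F] (C ⊗[F] M) :=
  (TensorProduct.assoc F C C M).toLinearMap ∘ₗ
    TensorProduct.map (tw : C ⊗[F] C →ₗ[F] C ⊗[F] C) (LinearMap.id : M →ₗ[F] M) ∘ₗ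
    (TensorProduct.assoc F C C M).symm.toLinearMap

/-- Comodule axioms over a post-Hom-Lie coalgebra `(C, γ, Δ, α)`, with structure
maps `Dd = Δ_⋄` and `Db = Δ_•`. -/
def IsPostHomLieComodule (γ Δ : C →ₗ[F] C ⊗[F] C) (α : C →ₗ[F] C)
    (Dd Db : M →ₗ[F] C ⊗[F] M) (αM : M →ₗ[F] M) : Prop :=
  (Dd ∘ₗ αM = TensorProduct.map α αM ∘ₗ Dd) ∧
  (Db ∘ₗ αM = TensorProduct.map α αM ∘ₗ Db) ∧
  (rTM γ αM ∘ₗ Dd = lTM α Dd ∘ₗ Dd - sw12M ∘ₗ (lTM α Dd ∘ₗ Dd)) ∧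
  (rTM Δ αM ∘ₗ Dd = lTM α Dd ∘ₗ Db - sw12M ∘ₗ (lTM α Db ∘ₗ Db)) ∧
  (rTM γ αM ∘ₗ Db =
    (lTM α Db ∘ₗ Db - sw12M ∘ₗ (lTM α Db ∘ₗ Db)) +
    (sw12M ∘ₗ (rTM Δ αM ∘ₗ Db) - rTM Δ αM ∘ₗ Db))

theorem aux_D (β : C →ₗ[F] C) (βM : M →ₗ[F] M) (D : M →ₗ[F] C ⊗[F] M)
    (hD : D ∘ₗ βM = TensorProduct.map β βM ∘ₗ D) :
    TensorProduct.map β (LinearMap.id : M →ₗ[F] M) ∘ₗ D ∘ₗ βM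
      = TensorProduct.map (β ∘ₗ β) βM ∘ₗ D := by
  rw [hD, ← LinearMap.comp_assoc, ← TensorProduct.map_comp, LinearMap.id_comp]

theorem aux_1 (α β : C →ₗ[F] C) (αM βM : M →ₗ[F] M) (D : M →ₗ[F] C ⊗[F] M)
    (hβα : β ∘ₗ α = α ∘ₗ β) (hβM : αM ∘ₗ βM = βM ∘ₗ αM)
    (hα : D ∘ₗ αM = TensorProduct.map α αM ∘ₗ D)
    (hD : D ∘ₗ βM = TensorProduct.map β βM ∘ₗ D) :
    (TensorProduct.map (β ∘ₗ β) βM ∘ₗ D) ∘ₗ (αM ∘ₗ βM)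
      = TensorProduct.map (β ∘ₗ α) (αM ∘ₗ βM) ∘ₗ (TensorProduct.map (β ∘ₗ β) βM ∘ₗ D) := by
  have e : (TensorProduct.map (β ∘ₗ β) βM ∘ₗ D) ∘ₗ (αM ∘ₗ βM)
      = TensorProduct.map (β ∘ₗ β) βM ∘ₗ ((D ∘ₗ αM) ∘ₗ βM) := rfl
  rw [e, hα, LinearMap.comp_assoc, hD]
  simp only [← LinearMap.comp_assoc, ← TensorProduct.map_comp]
  congr 2
  · simp only [LinearMap.comp_assoc, hβα]
    simp only [← LinearMap.comp_assoc, hβα]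
  · rw [← hβM]

/-- The common factor. -/
def auxT (β : C →ₗ[F] C) (βM : M →ₗ[F] M) :
    C ⊗[F] (C ⊗[F] M) →ₗ[F] C ⊗[F] (C ⊗[F] M) :=
  TensorProduct.map (β ∘ₗ β ∘ₗ β) (TensorProduct.map (β ∘ₗ β ∘ₗ β) (βM ∘ₗ βM))

theorem aux_sw_s19 (β : C →ₗ[F] C) (βM : M →ₗ[F] M) :
    sw12M ∘ₗ auxT β βM = auxT β βM ∘ₗ sw12M := by
  ext x y z
  simp [sw12M, auxT, tw]

theorem aux_r (f : C →ₗ[F] C ⊗[F] C) (β : C →ₗ[F] C) (αM βM : M →ₗ[F] M)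
    (D : M →ₗ[F] C ⊗[F] M)
    (hf : f ∘ₗ β = TensorProduct.map β β ∘ₗ f) (hβM : αM ∘ₗ βM = βM ∘ₗ αM) :
    rTM (f ∘ₗ β) (αM ∘ₗ βM) ∘ₗ (TensorProduct.map (β ∘ₗ β) βM ∘ₗ D)
      = auxT β βM ∘ₗ (rTM f αM ∘ₗ D) := by
  have h3 : (f ∘ₗ β) ∘ₗ (β ∘ₗ β)
      = TensorProduct.map (β ∘ₗ β ∘ₗ β) (β ∘ₗ β ∘ₗ β) ∘ₗ f := by
    have hf' : ∀ x, f (β x) = TensorProduct.map β β (f x) := fun x => LinearMap.congr_fun hf x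
    ext x
    simp only [TensorProduct.map_comp, LinearMap.comp_apply, hf']
  have h2 : (αM ∘ₗ βM) ∘ₗ βM = (βM ∘ₗ βM) ∘ₗ αM := by
    rw [hβM, LinearMap.comp_assoc, hβM, LinearMap.comp_assoc]
  have ha : auxT β βM ∘ₗ (TensorProduct.assoc F C C M).toLinearMap
      = (TensorProduct.assoc F C C M).toLinearMap ∘ₗ TensorProduct.map
        (TensorProduct.map (β ∘ₗ β ∘ₗ β) (β ∘ₗ β ∘ₗ β)) (βM ∘ₗ βM) := by
    ext x y z
    simp [auxT]
  simp only [rTM, ← LinearMap.comp_assoc]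
  rw [ha]
  congr 1
  simp only [LinearMap.comp_assoc]
  congr 1
  rw [← TensorProduct.map_comp, ← TensorProduct.map_comp, ← h3, ← h2]

theorem aux_l (α β : C →ₗ[F] C) (βM : M →ₗ[F] M) (D E : M →ₗ[F] C ⊗[F] M)
    (hβα : β ∘ₗ α = α ∘ₗ β) (hD : D ∘ₗ βM = TensorProduct.map β βM ∘ₗ D) :
    lTM (β ∘ₗ α) (TensorProduct.map (β ∘ₗ β) βM ∘ₗ D) ∘ₗ (TensorProduct.map (β ∘ₗ β) βM ∘ₗ E)
      = auxT β βM ∘ₗ (lTM α D ∘ₗ E) := by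
  simp only [lTM, auxT, ← LinearMap.comp_assoc, ← TensorProduct.map_comp]
  congr 2
  · have hc : ∀ x, β (α x) = α (β x) := fun x => LinearMap.congr_fun hβα x
    ext x
    simp only [LinearMap.comp_apply, hc]
  · rw [LinearMap.comp_assoc, hD, ← LinearMap.comp_assoc, ← TensorProduct.map_comp]

/-- Twisting a comodule over a post-Hom-Lie coalgebra by an endomorphism `β` of the
coalgebra and a compatible map `β_M` yields a comodule over the twisted
post-Hom-Lie coalgebra `(L, γ ∘ β, Δ ∘ β, β ∘ α)`. -/
theorem postHomLieComodule_twist_endo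
    (γ Δ : C →ₗ[F] C ⊗[F] C) (α β : C →ₗ[F] C)
    (Dd Db : M →ₗ[F] C ⊗[F] M) (αM βM : M →ₗ[F] M)
    (h : IsPostHomLieCoalgebra γ Δ α)
    (hβα : β ∘ₗ α = α ∘ₗ β)
    (hβγ : γ ∘ₗ β = TensorProduct.map β β ∘ₗ γ)
    (hβΔ : Δ ∘ₗ β = TensorProduct.map β β ∘ₗ Δ)
    (hM : IsPostHomLieComodule γ Δ α Dd Db αM)
    (hβM : αM ∘ₗ βM = βM ∘ₗ αM)
    (hβd : Dd ∘ₗ βM = TensorProduct.map β βM ∘ₗ Dd)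
    (hβb : Db ∘ₗ βM = TensorProduct.map β βM ∘ₗ Db) :
    IsPostHomLieComodule (γ ∘ₗ β) (Δ ∘ₗ β) (β ∘ₗ α)
      (TensorProduct.map β (LinearMap.id : M →ₗ[F] M) ∘ₗ Dd ∘ₗ βM)
      (TensorProduct.map β (LinearMap.id : M →ₗ[F] M) ∘ₗ Db ∘ₗ βM)
      (αM ∘ₗ βM) := by
  obtain ⟨h1, h2, h3, h4, h5⟩ := hM
  have sw : ∀ X : M →ₗ[F] C ⊗[F] (C ⊗[F] M),
      sw12M ∘ₗ (auxT β βM ∘ₗ X) = auxT β βM ∘ₗ (sw12M ∘ₗ X) := fun X => by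
    rw [← LinearMap.comp_assoc, aux_sw_s19, LinearMap.comp_assoc]
  rw [aux_D β βM Dd hβd, aux_D β βM Db hβb]
  refine ⟨aux_1 α β αM βM Dd hβα hβM h1 hβd, aux_1 α β αM βM Db hβα hβM h2 hβb, ?_, ?_, ?_⟩
  · rw [aux_r γ β αM βM Dd hβγ hβM, aux_l α β βM Dd Dd hβα hβd, sw, h3, LinearMap.comp_sub]
  · rw [aux_r Δ β αM βM Dd hβΔ hβM, aux_l α β βM Dd Db hβα hβd, aux_l α β βM Db Db hβα hβb,
      sw, h4, LinearMap.comp_sub]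
  · rw [aux_r γ β αM βM Db hβγ hβM, aux_r Δ β αM βM Db hβΔ hβM, aux_l α β βM Db Db hβα hβb,
      sw, sw, h5, LinearMap.comp_add, LinearMap.comp_sub, LinearMap.comp_sub]
end
end
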